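/- Let m be an odd prime and let h be an integer with 3 ≤ h ≤ m−1 such that either (I) m ≥ 5 and 2h ≡ 3 (mod m), or (II) m ≡ 2 (mod 3) and h = (m+1)/3. Set e = 3^h + 13. Then the ternary cyclic code C_{(1,e)} has parameters [3^m − 1, 3^m − 1 − 2m, 4]; that is, its F_3-dimension equals 3^m − 1 − 2m, every nonzero codeword has Hamming weight at least 4, and there exists a nonzero codeword of Hamming weight exactly 4. -/

import Mathlib

/-- The parity-check linear map `c ↦ ∑ i, c i • α ^ (v * i)` on `F₃^(3^m - 1)`. -/
noncomputable def parityMap (m v : ℕ) (α : GaloisField 3 m) :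
    (Fin (3 ^ m - 1) → ZMod 3) →ₗ[ZMod 3] GaloisField 3 m where
  toFun c := ∑ i, c i • α ^ (v * (i : ℕ))
  map_add' x y := by simp [add_smul, Finset.sum_add_distrib]
  map_smul' r x := by simp [smul_smul, Finset.smul_sum]

/-- The ternary cyclic code `C_{(1,e)}`: all vectors `c ∈ F₃^(3^m-1)` with
`∑ i, c i • α ^ i = 0` and `∑ i, c i • α ^ (e * i) = 0`. -/
noncomputable def ternaryCyclicCode (m e : ℕ) (α : GaloisField 3 m) :
    Submodule (ZMod 3) (Fin (3 ^ m - 1) → ZMod 3) :=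
  LinearMap.ker (parityMap m 1 α) ⊓ LinearMap.ker (parityMap m e α)

/-!
A codeword is a linear relation over `F₃` between the points `(α ^ i, α ^ (e * i))`.

Weight at least `4`: as `e` is even, a relation between at most two points is impossible. A relation
between three points can be scaled so that two of them differ by `1`; it then becomes one of two
equations in a single unknown `t`, according to the signs of its coefficients. Write
`σ t = t ^ 3 ^ h`; the two conditions on `h` say that `σ ^ 2` is `t ↦ t ^ 27`, respectively that
`σ ^ 3` is `t ↦ t ^ 3`. As `3 ∤ m`, no element satisfies `x ^ 3 - x = 1`, and after removing factors
of this kind either equation expresses `σ t` as a rational function of `t`.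

* Equal signs: `σ t - t = 1 / d - d` with `d = t ^ 3 - t`. The sum of the conjugates of the left
  side under the powers of `σ` telescopes, and `σ d` is a rational function of `d`, which leaves a
  polynomial equation for `d`.
* Opposite signs: iterating the expression for `σ t` two or three times gives a polynomial equation
  for `z = t ^ 2`, which forces `z = 1`, that is, a vanishing coordinate.

The polynomials that arise factor into powers of the excluded factors and sums of two coprime
squares, and the latter have no zero because `-1` is not a square for odd `m`.

Weight at most `4`: there are more vectors of weight `2` than syndromes, so two of them differ by a
codeword.

Dimension: `α` is not a square and `α ^ e` is, so their minimal polynomials are distinct; both have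
prime degree `m`. By the Chinese remainder theorem the syndrome map is surjective.
-/

section SumsOfTwoSquares

/-- The polynomial over `F₃` whose coefficients are the ternary digits of `n`, evaluated at `x`. It
gives compact names to the long polynomials occurring in the certificates below. -/
def ternaryEval {R : Type*} [CommRing R] (n : ℕ) (x : R) : R :=
  Nat.ofDigits x (Nat.digits 3 n)

lemma ternaryEval_zero {R : Type*} [CommRing R] (x : R) : ternaryEval 0 x = 0 := by
  simp [ternaryEval, Nat.ofDigits]

lemma ternaryEval_of_ne_zero {R : Type*} [CommRing R] {n : ℕ} (hn : n ≠ 0) (x : R) :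
    ternaryEval n x = (n % 3 : ℕ) + x * ternaryEval (n / 3) x := by
  rw [ternaryEval, Nat.digits_def' (by decide) (Nat.pos_of_ne_zero hn)]
  rfl

lemma sq_add_sq_ne_zero_of_isCoprime {K : Type*} [Field K] (hsq : ¬IsSquare (-1 : K)) {a b : K}
    (hab : IsCoprime a b) : a ^ 2 + b ^ 2 ≠ 0 := by
  intro h
  have hb : b ≠ 0 := by
    rintro rfl
    exact hab.ne_zero_or_ne_zero.elim (fun ha => ha (by simpa using h)) fun hb => hb rfl
  exact hsq ⟨a / b, by field_simp; linear_combination -h⟩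

end SumsOfTwoSquares

section PowMap

variable {R : Type*} [CommRing R] (σ : R →+* R)

/-- The power map `x ↦ x ^ e` with `e = 3 ^ h + 13`, where `σ` stands for `x ↦ x ^ 3 ^ h`. -/
def powMap (x : R) : R := σ x * x ^ 13

lemma powMap_mul (x y : R) : powMap σ (x * y) = powMap σ x * powMap σ y := by
  simp only [powMap, map_mul, mul_pow]; ring

lemma powMap_neg (x : R) : powMap σ (-x) = powMap σ x := by
  simp only [powMap, map_neg]; ring

lemma powMap_ne_zero {K : Type*} [Field K] (σ : K →+* K) {x : K} (hx : x ≠ 0) : powMap σ x ≠ 0 :=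
  mul_ne_zero ((map_ne_zero σ).2 hx) (pow_ne_zero _ hx)

/-- `σ` is the power `3 / 2` or the power `1 / 3` of the Frobenius map of a ring of
characteristic `3`: these are the two families of exponents `h` of the theorem. -/
def IsFractionalFrobenius : Prop :=
  (∀ x, σ (σ x) = x ^ 27) ∨ ∀ x, σ (σ (σ x)) = x ^ 3

end PowMap

section EqualSigns

variable {K : Type*} [Field K]

lemma cube_sub_sq_ne_one (hAS : ∀ x : K, x ^ 3 - x ≠ 1) (x : K) : (x ^ 3 - x) ^ 2 ≠ 1 :=
  sq_ne_one_iff.2 ⟨hAS x, fun h => hAS (-x) (by linear_combination -h)⟩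

/-- Numerator and denominator of `(1 - s ^ 2 - s ^ 4 - s ^ 6) / s ^ 3` at a fraction `s = n / d`,
given as the pair `p = (n, d)`. -/
def equalSignsStep {R : Type*} [CommRing R] (p : R × R) : R × R :=
  (p.2 ^ 6 - p.1 ^ 2 * p.2 ^ 4 - p.1 ^ 4 * p.2 ^ 2 - p.1 ^ 6, (p.1 * p.2) ^ 3)

lemma mul_equalSignsStep {R : Type*} [CommRing R] {s s' : R} {p : R × R}
    (hs : s' * s ^ 3 = 1 - s ^ 2 - s ^ 4 - s ^ 6) (hp : s * p.2 = p.1) :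
    s' * (equalSignsStep p).2 = (equalSignsStep p).1 := by
  rw [equalSignsStep, ← hp]
  linear_combination p.2 ^ 6 * hs

lemma exists_equalSignsStep_eq_sq_add_sq {R : Type*} [CommRing R] [CharP R 3] (s : R) :
    let p := equalSignsStep (s, 1)
    let q := equalSignsStep p
    ∃ a b : R, IsCoprime a b ∧
      p.1 * q.1 * p.2 * q.2 + s * p.2 ^ 2 * q.1 * q.2 + s * p.1 * p.2 * q.2 ^ 2
          - s * p.1 * q.1 * (p.1 * q.2 + q.1 * p.2 - s * p.2 * q.2) =
        s ^ 4 * ((s ^ 3 - s) ^ 2 - 1) * (a ^ 2 + b ^ 2) := by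
  -- The last factor splits over `F₉ = F₃(i)` into the conjugates `a + b i` and `a - b i`.
  refine ⟨ternaryEval 178116069805328832 s, ternaryEval 141186320440930072 s,
    ⟨ternaryEval 24273758662415252 s, ternaryEval 53443061979514018 s, ?_⟩, ?_⟩
  all_goals
    simp only [equalSignsStep, ternaryEval_of_ne_zero, ternaryEval_zero, Nat.reduceMod,
      Nat.reduceDiv, ne_eq, OfNat.ofNat_ne_zero, one_ne_zero, not_false_eq_true, Nat.cast_ofNat,
      Nat.cast_zero, Nat.cast_one]
    grind

variable [CharP K 3] {σ : K →+* K} {t : K}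

lemma map_sub_self_of_powMap_sum_eq_zero (hAS : ∀ x : K, x ^ 3 - x ≠ 1)
    (h : powMap σ (t - 1) + powMap σ t + powMap σ (t + 1) = 0) :
    t ^ 3 - t ≠ 0 ∧ σ t - t = (t ^ 3 - t)⁻¹ - (t ^ 3 - t) := by
  simp only [powMap, map_sub, map_add, map_one] at h
  have hfactor : ((t ^ 3 - t) ^ 2 - 1) * ((σ t + t ^ 3 + t) * (t ^ 3 - t) - 1) = 0 := by grind
  have hmul : (σ t + t ^ 3 + t) * (t ^ 3 - t) = 1 := sub_eq_zero.1
    ((mul_eq_zero.1 hfactor).resolve_left (sub_ne_zero.2 (cube_sub_sq_ne_one hAS t)))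
  refine ⟨right_ne_zero_of_mul_eq_one hmul, ?_⟩
  rw [inv_eq_of_mul_eq_one_left hmul]
  grind

lemma map_cube_sub_mul_cube (ht : t ^ 3 - t ≠ 0) (h : σ t - t = (t ^ 3 - t)⁻¹ - (t ^ 3 - t)) :
    σ (t ^ 3 - t) * (t ^ 3 - t) ^ 3 =
      1 - (t ^ 3 - t) ^ 2 - (t ^ 3 - t) ^ 4 - (t ^ 3 - t) ^ 6 := by
  rw [map_sub, map_pow]
  grind

lemma quintic_ne_zero (hAS : ∀ x : K, x ^ 3 - x ≠ 1) (x : K) :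
    let d := x ^ 3 - x
    1 + d + d ^ 2 + d ^ 4 + d ^ 5 ≠ 0 := by
  intro d hd
  refine hAS (x - (d - d ^ 2 - d ^ 4)) ?_
  have hx : x ^ 3 - x = d := rfl
  clear_value d
  grind

lemma cube_sub_telescope_two {d s : K} (hd : d ≠ 0) (hs : s ≠ 0)
    (hsd : s * d ^ 3 = 1 - d ^ 2 - d ^ 4 - d ^ 6)
    (hsum : d ^ 9 + d ^ 3 + d = d⁻¹ - d + (s⁻¹ - s)) :
    (d ^ 2 - 1) ^ 4 * (1 + d + d ^ 2 + d ^ 4 + d ^ 5) * (1 - d + d ^ 2 + d ^ 4 - d ^ 5) = 0 := by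
  have hinv : d ^ 3 * s⁻¹ = d ^ 12 + d ^ 4 + d ^ 2 + 1 := by
    clear hs
    grind
  have hmul : (1 - d ^ 2 - d ^ 4 - d ^ 6) * (d ^ 12 + d ^ 4 + d ^ 2 + 1) = d ^ 6 := by
    rw [← hsd, ← hinv]
    field_simp
  clear hs hinv hsum hsd hd
  grind

lemma map_sub_self_ne_of_map_map (hAS : ∀ x : K, x ^ 3 - x ≠ 1)
    (hσ : ∀ x, σ (σ x) = x ^ 27) (ht : t ^ 3 - t ≠ 0) :
    σ t - t ≠ (t ^ 3 - t)⁻¹ - (t ^ 3 - t) := by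
  intro h
  have h' : t ^ 27 - σ t = (σ (t ^ 3 - t))⁻¹ - σ (t ^ 3 - t) := by
    simpa only [map_sub, map_inv₀, hσ] using congrArg σ h
  have hsplit : (t ^ 3 - t) ^ 9 + (t ^ 3 - t) ^ 3 + (t ^ 3 - t) = t ^ 27 - t := by
    clear * -
    grind
  have hfactor := cube_sub_telescope_two ht ((map_ne_zero σ).2 ht) (map_cube_sub_mul_cube ht h)
    (by linear_combination hsplit + h + h')
  have hneg := quintic_ne_zero hAS (-t)
  refine mul_ne_zero (mul_ne_zero (pow_ne_zero 4 ?_) (quintic_ne_zero hAS t)) ?_ hfactor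
  · exact sub_ne_zero.2 (cube_sub_sq_ne_one hAS t)
  · exact fun h0 => hneg (by linear_combination h0)

lemma cube_sub_telescope_three (hsq : ¬IsSquare (-1 : K)) {d s₁ s₂ : K} (hd : d ≠ 0) (hs₁ : s₁ ≠ 0)
    (hs₂ : s₂ ≠ 0) (h₁ : s₁ * d ^ 3 = 1 - d ^ 2 - d ^ 4 - d ^ 6)
    (h₂ : s₂ * s₁ ^ 3 = 1 - s₁ ^ 2 - s₁ ^ 4 - s₁ ^ 6)
    (hsum : d = d⁻¹ - d + (s₁⁻¹ - s₁) + (s₂⁻¹ - s₂)) : (d ^ 3 - d) ^ 2 = 1 := by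
  have hmul : s₁ * s₂ + d * s₂ + d * s₁ = d * s₁ * s₂ * (s₁ + s₂ - d) := by
    field_simp at hsum
    grind
  obtain ⟨a, b, hab, heq⟩ := exists_equalSignsStep_eq_sq_add_sq d
  have hp := mul_equalSignsStep (p := (d, 1)) h₁ (mul_one d)
  have hq := mul_equalSignsStep h₂ hp
  have hzero : d ^ 4 * ((d ^ 3 - d) ^ 2 - 1) * (a ^ 2 + b ^ 2) = 0 := by
    rw [← heq, ← hp, ← hq]
    linear_combination (equalSignsStep (d, 1)).2 ^ 2 *
      (equalSignsStep (equalSignsStep (d, 1))).2 ^ 2 * hmul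
  have := (mul_eq_zero.1 hzero).resolve_right (sq_add_sq_ne_zero_of_isCoprime hsq hab)
  exact sub_eq_zero.1 ((mul_eq_zero.1 this).resolve_left (pow_ne_zero 4 hd))

lemma map_sub_self_ne_of_map_map_map (hAS : ∀ x : K, x ^ 3 - x ≠ 1) (hsq : ¬IsSquare (-1 : K))
    (hσ : ∀ x, σ (σ (σ x)) = x ^ 3) (ht : t ^ 3 - t ≠ 0) :
    σ t - t ≠ (t ^ 3 - t)⁻¹ - (t ^ 3 - t) := by
  intro h
  have ht' : σ (t ^ 3 - t) ≠ 0 := (map_ne_zero σ).2 ht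
  have h₁ : σ (σ t) - σ t = (σ (t ^ 3 - t))⁻¹ - σ (t ^ 3 - t) := by
    simpa only [map_sub, map_inv₀] using congrArg σ h
  have h₂ : t ^ 3 - σ (σ t) = (σ (σ (t ^ 3 - t)))⁻¹ - σ (σ (t ^ 3 - t)) := by
    simpa only [map_sub, map_inv₀, hσ] using congrArg σ h₁
  have hd := map_cube_sub_mul_cube ht h
  have hd' : σ (σ (t ^ 3 - t)) * σ (t ^ 3 - t) ^ 3 = 1 - σ (t ^ 3 - t) ^ 2 - σ (t ^ 3 - t) ^ 4 -
      σ (t ^ 3 - t) ^ 6 := by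
    simpa only [map_sub, map_mul, map_pow, map_one] using congrArg σ hd
  exact cube_sub_sq_ne_one hAS (t ^ 3 - t) (cube_sub_telescope_three hsq ht ht'
    ((map_ne_zero σ).2 ht') hd hd' (by linear_combination h + h₁ + h₂))

theorem powMap_sub_one_add_powMap_add_powMap_add_one_ne_zero (hσ : IsFractionalFrobenius σ)
    (hAS : ∀ x : K, x ^ 3 - x ≠ 1) (hsq : ¬IsSquare (-1 : K)) (t : K) :
    powMap σ (t - 1) + powMap σ t + powMap σ (t + 1) ≠ 0 := by
  intro h
  obtain ⟨ht, hdiff⟩ := map_sub_self_of_powMap_sum_eq_zero hAS h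
  rcases hσ with hσ | hσ
  · exact map_sub_self_ne_of_map_map hAS hσ ht hdiff
  · exact map_sub_self_ne_of_map_map_map hAS hsq hσ ht hdiff

end EqualSigns

section OppositeSigns

/-- If `x = t * n / d` with `t ^ 2 = z` and `p = (n, d)`, then
`(x ^ 6 + x ^ 4 + x ^ 2 - 1) / (x * (1 + x ^ 2) ^ 3) = t * n' / d'` in characteristic `3`, where
`(n', d')` is the value of this function. Cubes are kept together, as the Frobenius map distributes
them over sums. -/
def oppositeSignsStep {R : Type*} [CommRing R] (z : R) (p : R × R) : R × R :=
  (p.2 * (z ^ 3 * (p.1 ^ 3) ^ 2 + z ^ 2 * (p.1 ^ 3 * p.1 * p.2 ^ 2) +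
      z * (p.1 ^ 2 * (p.2 ^ 3 * p.2)) - (p.2 ^ 3) ^ 2),
    z * p.1 * (z ^ 3 * (p.1 ^ 3) ^ 2 + (p.2 ^ 3) ^ 2))

section CharThree

variable {R : Type*} [CommRing R] [CharP R 3]

lemma mul_oppositeSignsStep {t x x' : R} {p : R × R}
    (hx : x' * (x * (1 + x ^ 2) ^ 3) = x ^ 6 + x ^ 4 + x ^ 2 - 1) (hp : x * p.2 = t * p.1) :
    x' * (oppositeSignsStep (t ^ 2) p).2 = t * (oppositeSignsStep (t ^ 2) p).1 := by
  have hcube : (1 + x ^ 2) ^ 3 = 1 + x ^ 6 := by rw [add_pow_char, one_pow, ← pow_mul]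
  rw [hcube] at hx
  calc x' * (oppositeSignsStep (t ^ 2) p).2
    _ = t * (x' * (t * p.1 * ((t * p.1) ^ 6 + p.2 ^ 6))) := by rw [oppositeSignsStep]; ring
    _ = t * (p.2 * ((t * p.1) ^ 6 + (t * p.1) ^ 4 * p.2 ^ 2 + (t * p.1) ^ 2 * p.2 ^ 4 -
        p.2 ^ 6)) := by rw [← hp]; linear_combination t * p.2 ^ 7 * hx
    _ = t * (oppositeSignsStep (t ^ 2) p).1 := by rw [oppositeSignsStep]; ring

lemma exists_oppositeSignsStep_iterate_two_eq (z : R) :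
    ∃ a b : R, IsCoprime a b ∧
      z ^ 13 * ((oppositeSignsStep z)^[2] (1, 1)).2 - ((oppositeSignsStep z)^[2] (1, 1)).1 =
        z ^ 4 * (z - 1) * (z ^ 3 - z - 1) ^ 4 * (a ^ 2 + b ^ 2) := by
  refine ⟨ternaryEval 1586607 z, ternaryEval 264373 z,
    ⟨ternaryEval 114410 z, ternaryEval 346051 z, ?_⟩, ?_⟩
  all_goals
    simp only [Function.iterate_succ_apply, Function.iterate_zero_apply, oppositeSignsStep,
      mul_pow, add_pow_char, sub_pow_char, one_pow, mul_one, one_mul, ternaryEval_of_ne_zero,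
      ternaryEval_zero, Nat.reduceMod, Nat.reduceDiv, ne_eq, OfNat.ofNat_ne_zero, one_ne_zero,
      not_false_eq_true, Nat.cast_ofNat, Nat.cast_zero, Nat.cast_one]
    grind

set_option maxRecDepth 20000 in
lemma exists_oppositeSignsStep_iterate_three_eq (z : R) :
    ∃ a b c d : R, IsCoprime a b ∧ IsCoprime c d ∧
      ((oppositeSignsStep z)^[3] (1, 1)).1 - z * ((oppositeSignsStep z)^[3] (1, 1)).2 =
        z ^ 28 * (z - 1) * (a ^ 2 + b ^ 2) * (c ^ 2 + d ^ 2) := by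
  refine ⟨ternaryEval 1431512176337800447334755 z, ternaryEval 327249375756001897262465 z,
    ternaryEval 205928272500119733 z, ternaryEval 118998616843624289 z,
    ⟨ternaryEval 156426312623218121897546 z, ternaryEval 505769311120951429280344 z, ?_⟩,
    ⟨ternaryEval 10146987233816994 z, ternaryEval 25468285703326271 z, ?_⟩, ?_⟩
  all_goals
    simp only [Function.iterate_succ_apply, Function.iterate_zero_apply, oppositeSignsStep,
      mul_pow, add_pow_char, sub_pow_char, one_pow, mul_one, one_mul, ternaryEval_of_ne_zero,
      ternaryEval_zero, Nat.reduceMod, Nat.reduceDiv, ne_eq, OfNat.ofNat_ne_zero, one_ne_zero,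
      not_false_eq_true, Nat.cast_ofNat, Nat.cast_zero, Nat.cast_one]
    grind

end CharThree

variable {K : Type*} [Field K] [CharP K 3] {σ : K →+* K} {t : K}

lemma map_mul_of_powMap_add_eq (hAS : ∀ x : K, x ^ 3 - x ≠ 1)
    (h : powMap σ (t + 1) + powMap σ (t - 1) = powMap σ t) :
    σ t * (t * (1 + t ^ 2) ^ 3) = t ^ 6 + t ^ 4 + t ^ 2 - 1 := by
  simp only [powMap, map_sub, map_add, map_one] at h
  have hfactor : ((t ^ 2) ^ 3 - t ^ 2 - 1) *
      (σ t * (t * (1 + t ^ 2) ^ 3) - (t ^ 6 + t ^ 4 + t ^ 2 - 1)) = 0 := by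
    clear hAS
    grind
  exact sub_eq_zero.1 ((mul_eq_zero.1 hfactor).resolve_left (sub_ne_zero.2 (hAS (t ^ 2))))

lemma iterate_mul_oppositeSignsStep_iterate
    (h : σ t * (t * (1 + t ^ 2) ^ 3) = t ^ 6 + t ^ 4 + t ^ 2 - 1) (k : ℕ) :
    σ^[k] t * ((oppositeSignsStep (t ^ 2))^[k] (1, 1)).2 =
      t * ((oppositeSignsStep (t ^ 2))^[k] (1, 1)).1 := by
  induction k with
  | zero => rfl
  | succ k ih =>
    rw [Function.iterate_succ_apply', Function.iterate_succ_apply']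
    refine mul_oppositeSignsStep ?_ ih
    have hk := congrArg σ^[k] h
    simp only [iterate_map_mul, iterate_map_add, iterate_map_sub, iterate_map_one, iterate_map_pow]
      at hk
    rw [← Function.iterate_succ_apply' σ k t, Function.iterate_succ_apply]
    exact hk

lemma sq_eq_one_of_map_map (hAS : ∀ x : K, x ^ 3 - x ≠ 1) (hsq : ¬IsSquare (-1 : K))
    (hσ : ∀ x, σ (σ x) = x ^ 27) (ht : t ≠ 0)
    (h : σ t * (t * (1 + t ^ 2) ^ 3) = t ^ 6 + t ^ 4 + t ^ 2 - 1) : t ^ 2 = 1 := by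
  obtain ⟨a, b, hab, heq⟩ := exists_oppositeSignsStep_iterate_two_eq (t ^ 2)
  have hk := iterate_mul_oppositeSignsStep_iterate h 2
  rw [show σ^[2] t = t ^ 27 from hσ t] at hk
  have hz : (t ^ 2) ^ 4 * (t ^ 2 - 1) * ((t ^ 2) ^ 3 - t ^ 2 - 1) ^ 4 * (a ^ 2 + b ^ 2) = 0 := by
    rw [← heq]
    exact mul_left_cancel₀ ht (by linear_combination hk)
  have hAS' := pow_ne_zero 4 (sub_ne_zero.2 (hAS (t ^ 2)))
  simpa [ht, hAS', sq_add_sq_ne_zero_of_isCoprime hsq hab, sub_eq_zero] using hz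

lemma sq_eq_one_of_map_map_map (hsq : ¬IsSquare (-1 : K))
    (hσ : ∀ x, σ (σ (σ x)) = x ^ 3) (ht : t ≠ 0)
    (h : σ t * (t * (1 + t ^ 2) ^ 3) = t ^ 6 + t ^ 4 + t ^ 2 - 1) : t ^ 2 = 1 := by
  obtain ⟨a, b, c, d, hab, hcd, heq⟩ := exists_oppositeSignsStep_iterate_three_eq (t ^ 2)
  have hk := iterate_mul_oppositeSignsStep_iterate h 3
  rw [show σ^[3] t = t ^ 3 from hσ t] at hk
  have hz : (t ^ 2) ^ 28 * (t ^ 2 - 1) * (a ^ 2 + b ^ 2) * (c ^ 2 + d ^ 2) = 0 := by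
    rw [← heq]
    exact mul_left_cancel₀ ht (by linear_combination -hk)
  simpa [ht, sq_add_sq_ne_zero_of_isCoprime hsq hab, sq_add_sq_ne_zero_of_isCoprime hsq hcd,
    sub_eq_zero] using hz

theorem sq_eq_one_of_powMap_add_powMap_eq (hσ : IsFractionalFrobenius σ)
    (hAS : ∀ x : K, x ^ 3 - x ≠ 1) (hsq : ¬IsSquare (-1 : K)) (ht : t ≠ 0)
    (h : powMap σ (t + 1) + powMap σ (t - 1) = powMap σ t) : t ^ 2 = 1 :=
  hσ.elim (fun hσ => sq_eq_one_of_map_map hAS hsq hσ ht (map_mul_of_powMap_add_eq hAS h))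
    fun hσ => sq_eq_one_of_map_map_map hsq hσ ht (map_mul_of_powMap_add_eq hAS h)

end OppositeSigns

section MinimumWeight

lemma eq_one_or_eq_neg_one_of_ne_zero : ∀ {a : ZMod 3}, a ≠ 0 → a = 1 ∨ a = -1 := by
  decide

variable {K : Type*} [Field K] [CharP K 3] {σ : K →+* K} {x y z : K}

lemma powMap_add_add_ne_zero (hσ : IsFractionalFrobenius σ) (hAS : ∀ x : K, x ^ 3 - x ≠ 1)
    (hsq : ¬IsSquare (-1 : K)) (hxy : x ≠ y) (h : x + y + z = 0) :
    powMap σ x + powMap σ y + powMap σ z ≠ 0 := by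
  obtain ⟨v, rfl⟩ : ∃ v, y = x + v := ⟨y - x, by ring⟩
  have hv : v ≠ 0 := by simpa using hxy
  obtain ⟨t, rfl⟩ : ∃ t, x = t * v := ⟨x / v, (div_mul_cancel₀ x hv).symm⟩
  have hz : z = (t - 1) * v := by grind
  have hy : t * v + v = (t + 1) * v := by ring
  have hne := mul_ne_zero (powMap_sub_one_add_powMap_add_powMap_add_one_ne_zero hσ hAS hsq t)
    (powMap_ne_zero σ hv)
  rw [hz, hy, powMap_mul, powMap_mul, powMap_mul]
  exact fun h0 => hne (by linear_combination h0)

lemma powMap_add_ne (hσ : IsFractionalFrobenius σ) (hAS : ∀ x : K, x ^ 3 - x ≠ 1)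
    (hsq : ¬IsSquare (-1 : K)) (hx : x ≠ 0) (hy : y ≠ 0) (hz : z ≠ 0) (hxy : x ≠ y)
    (h : x + y = z) : powMap σ x + powMap σ y ≠ powMap σ z := by
  intro hpow
  obtain ⟨v, rfl⟩ : ∃ v, y = x + v := ⟨y - x, by ring⟩
  have hv : v ≠ 0 := by simpa using hxy
  obtain ⟨t, rfl⟩ : ∃ t, z = -(t * v) := ⟨-z / v, by field_simp⟩
  have ht : t ≠ 0 := left_ne_zero_of_mul (neg_ne_zero.1 hz)
  have hx' : x = (t + 1) * v := by grind
  have hy' : x + v = (t - 1) * v := by grind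
  rw [hy'] at hpow hy
  rw [hx'] at hpow hx
  rw [powMap_neg, powMap_mul, powMap_mul, powMap_mul, ← add_mul] at hpow
  have ht2 := sq_eq_one_of_powMap_add_powMap_eq hσ hAS hsq ht
    (mul_right_cancel₀ (powMap_ne_zero σ hv) hpow)
  exact mul_ne_zero (left_ne_zero_of_mul hx) (left_ne_zero_of_mul hy) (by linear_combination ht2)

variable [Module (ZMod 3) K] {a b c : ZMod 3}

lemma smul_powMap_add_ne_zero (hx : x ≠ 0) (hxy : x ≠ y) (ha : a ≠ 0) (hb : b ≠ 0)
    (h : a • x + b • y = 0) : a • powMap σ x + b • powMap σ y ≠ 0 := by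
  have equal (hsum : x + y = 0) : powMap σ x + powMap σ y ≠ 0 := by
    rw [eq_neg_of_add_eq_zero_right hsum, powMap_neg]
    exact fun h0 => powMap_ne_zero σ hx (by grind)
  intro hpow
  obtain rfl | rfl := eq_one_or_eq_neg_one_of_ne_zero ha <;>
    obtain rfl | rfl := eq_one_or_eq_neg_one_of_ne_zero hb <;>
    simp only [one_smul, neg_smul] at h hpow
  · exact equal h hpow
  · exact hxy (by linear_combination h)
  · exact hxy (by linear_combination -h)
  · exact equal (by linear_combination -h) (by linear_combination -hpow)

lemma smul_powMap_add_add_ne_zero (hσ : IsFractionalFrobenius σ) (hAS : ∀ x : K, x ^ 3 - x ≠ 1)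
    (hsq : ¬IsSquare (-1 : K)) (hx : x ≠ 0) (hy : y ≠ 0) (hz : z ≠ 0) (hxy : x ≠ y) (hxz : x ≠ z)
    (hyz : y ≠ z) (ha : a ≠ 0) (hb : b ≠ 0) (hc : c ≠ 0) (h : a • x + b • y + c • z = 0) :
    a • powMap σ x + b • powMap σ y + c • powMap σ z ≠ 0 := by
  have equal {x y z : K} := powMap_add_add_ne_zero (x := x) (y := y) (z := z) hσ hAS hsq
  have opposite {x y z : K} := powMap_add_ne (x := x) (y := y) (z := z) hσ hAS hsq
  intro hpow
  obtain rfl | rfl := eq_one_or_eq_neg_one_of_ne_zero ha <;>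
    obtain rfl | rfl := eq_one_or_eq_neg_one_of_ne_zero hb <;>
    obtain rfl | rfl := eq_one_or_eq_neg_one_of_ne_zero hc <;>
    simp only [one_smul, neg_smul] at h hpow
  · exact equal hxy h hpow
  · exact opposite hx hy hz hxy (by linear_combination h) (by linear_combination hpow)
  · exact opposite hx hz hy hxz (by linear_combination h) (by linear_combination hpow)
  · exact opposite hy hz hx hyz (by linear_combination -h) (by linear_combination -hpow)
  · exact opposite hy hz hx hyz (by linear_combination h) (by linear_combination hpow)
  · exact opposite hx hz hy hxz (by linear_combination -h) (by linear_combination -hpow)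
  · exact opposite hx hy hz hxy (by linear_combination -h) (by linear_combination -hpow)
  · exact equal (z := z) hxy (by linear_combination -h) (by linear_combination -hpow)

variable {ι : Type*} {u : ι → K}

lemma four_le_card_of_sum_smul_eq_zero (hσ : IsFractionalFrobenius σ)
    (hAS : ∀ x : K, x ^ 3 - x ≠ 1) (hsq : ¬IsSquare (-1 : K)) (hu : Function.Injective u)
    (hu₀ : ∀ i, u i ≠ 0) {w : ι → ZMod 3} {s : Finset ι} (hs : s.Nonempty)
    (hw : ∀ i ∈ s, w i ≠ 0) (h : ∑ i ∈ s, w i • u i = 0)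
    (hpow : ∑ i ∈ s, w i • powMap σ (u i) = 0) : 4 ≤ s.card := by
  classical
  by_contra! hlt
  have hpos := hs.card_pos
  obtain hcard | hcard | hcard : s.card = 1 ∨ s.card = 2 ∨ s.card = 3 := by omega
  · obtain ⟨i, rfl⟩ := Finset.card_eq_one.1 hcard
    rw [Finset.sum_singleton] at h
    exact smul_ne_zero (hw i (by simp)) (hu₀ i) h
  · obtain ⟨i, j, hij, rfl⟩ := Finset.card_eq_two.1 hcard
    rw [Finset.sum_pair hij] at h hpow
    exact smul_powMap_add_ne_zero (hu₀ i) (hu.ne hij) (hw i (by simp)) (hw j (by simp)) h hpow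
  · obtain ⟨i, j, k, hij, hik, hjk, rfl⟩ := Finset.card_eq_three.1 hcard
    rw [Finset.sum_insert (by simp [hij, hik]), Finset.sum_pair hjk, ← add_assoc] at h hpow
    exact smul_powMap_add_add_ne_zero hσ hAS hsq (hu₀ i) (hu₀ j) (hu₀ k) (hu.ne hij) (hu.ne hik)
      (hu.ne hjk) (hw i (by simp)) (hw j (by simp)) (hw k (by simp)) h hpow

theorem four_le_hammingNorm_of_sum_smul_eq_zero [Fintype ι] (hσ : IsFractionalFrobenius σ)
    (hAS : ∀ x : K, x ^ 3 - x ≠ 1) (hsq : ¬IsSquare (-1 : K)) (hu : Function.Injective u)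
    (hu₀ : ∀ i, u i ≠ 0) {w : ι → ZMod 3} (hw : w ≠ 0) (h : ∑ i, w i • u i = 0)
    (hpow : ∑ i, w i • powMap σ (u i) = 0) : 4 ≤ hammingNorm w := by
  have hsupp (v : ι → K) : ∑ i with w i ≠ 0, w i • v i = ∑ i, w i • v i :=
    Finset.sum_filter_of_ne fun i _ hi => left_ne_zero_of_smul hi
  obtain ⟨i, hi⟩ := Function.ne_iff.1 hw
  exact four_le_card_of_sum_smul_eq_zero hσ hAS hsq hu hu₀ ⟨i, by simpa using hi⟩ (by simp)
    ((hsupp u).trans h) ((hsupp _).trans hpow)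

end MinimumWeight

section SpherePacking

open Finset

variable {ι : Type*} [Fintype ι] {F : Type*} [DecidableEq F]

lemma card_filter_support_eq [Zero F] [Fintype F] [DecidableEq ι] (s : Finset ι) :
    #{v : ι → F | ({i | v i ≠ 0} : Finset ι) = s} = (Fintype.card F - 1) ^ #s := by
  have hpi : ({v : ι → F | ({i | v i ≠ 0} : Finset ι) = s} : Finset (ι → F)) =
      Fintype.piFinset fun i => if i ∈ s then {0}ᶜ else {0} := by
    ext v
    simp only [mem_filter_univ, Fintype.mem_piFinset, Finset.ext_iff]
    refine forall_congr' fun i => ?_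
    split_ifs with hi <;> simp [hi]
  rw [hpi, Fintype.card_piFinset]
  simp [card_compl, apply_ite]

lemma card_filter_hammingNorm_eq [Zero F] [Fintype F] [DecidableEq ι] (k : ℕ) :
    #{v : ι → F | hammingNorm v = k} =
      (Fintype.card ι).choose k * (Fintype.card F - 1) ^ k := by
  have hmaps : ∀ v ∈ ({v : ι → F | hammingNorm v = k} : Finset (ι → F)),
      ({i | v i ≠ 0} : Finset ι) ∈ univ.powersetCard k := by
    intro v hv
    simpa [mem_powersetCard, hammingNorm] using hv
  rw [card_eq_sum_card_fiberwise hmaps, ← card_univ (α := ι), ← card_powersetCard, ← smul_eq_mul,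
    ← sum_const]
  refine sum_congr rfl fun s hs => ?_
  rw [← (mem_powersetCard.1 hs).2, ← card_filter_support_eq (F := F) s, filter_filter]
  refine congrArg card (filter_congr fun v _ => and_iff_right_of_imp ?_)
  rintro rfl
  rfl

lemma exists_ne_zero_map_eq_zero_hammingNorm_le [AddGroup F] {V : Type*} [AddGroup V] [Fintype V]
    (L : (ι → F) →+ V) {s : Finset (ι → F)} {k : ℕ} (hs : ∀ v ∈ s, hammingNorm v ≤ k)
    (hcard : Fintype.card V < #s) : ∃ c, L c = 0 ∧ c ≠ 0 ∧ hammingNorm c ≤ 2 * k := by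
  obtain ⟨v, hv, w, hw, hne, hvw⟩ :=
    exists_ne_map_eq_of_card_lt_of_maps_to (t := univ) hcard (f := L) (by simp)
  refine ⟨-v + w, by rw [map_add, map_neg, hvw, neg_add_cancel],
    fun h => hne (neg_add_eq_zero.1 h), ?_⟩
  calc hammingNorm (-v + w) = hammingDist v w := (hammingDist_eq_hammingNorm v w).symm
    _ ≤ hammingDist v 0 + hammingDist w 0 := hammingDist_triangle_right v w 0
    _ ≤ 2 * k := by simpa [two_mul] using add_le_add (hs v hv) (hs w hw)

lemma exists_ne_zero_map_eq_zero_hammingNorm_le_four {V : Type*} [AddGroup V] [Fintype V]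
    (L : (ι → ZMod 3) →+ V) (hι : 5 ≤ Fintype.card ι)
    (hV : Fintype.card V = (Fintype.card ι + 1) ^ 2) :
    ∃ c, L c = 0 ∧ c ≠ 0 ∧ hammingNorm c ≤ 4 := by
  classical
  refine exists_ne_zero_map_eq_zero_hammingNorm_le (k := 2) L
    (s := {v | hammingNorm v = 2}) (fun v hv => ((mem_filter_univ v).1 hv).le) ?_
  obtain ⟨n, hn⟩ := Nat.exists_eq_add_of_le' hι
  have hchoose : (n + 5).choose 2 * 2 = (n + 5) * (n + 4) := by
    rw [Nat.choose_two_right]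
    exact Nat.div_mul_cancel (Nat.even_mul_pred_self (n + 5)).two_dvd
  rw [card_filter_hammingNorm_eq, hV, ZMod.card, hn]
  nlinarith

end SpherePacking

section PowerSums

open Polynomial

variable {F K : Type*} [Field F] [Field K] [Algebra F K] {β γ : K}

lemma aeval_surjective_of_finrank_prime (hp : (Module.finrank F K).Prime)
    (hβ : β ∉ (⊥ : IntermediateField F K)) :
    Function.Surjective (aeval β : F[X] → K) := by
  have : FiniteDimensional F K := Module.finite_of_finrank_pos hp.pos
  have := Subalgebra.isSimpleOrder_of_finrank_prime F K hp
  have hadjoin : Algebra.adjoin F {β} = ⊤ := (eq_bot_or_eq_top _).resolve_left fun h =>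
    hβ (IntermediateField.mem_bot.2 (Algebra.mem_bot.1 (h ▸ Algebra.self_mem_adjoin_singleton F β)))
  rw [Algebra.adjoin_singleton_eq_range_aeval] at hadjoin
  exact (AlgHom.range_eq_top _).1 hadjoin

lemma isCoprime_minpoly_of_ne (hβ : IsIntegral F β) (hγ : IsIntegral F γ)
    (hne : minpoly F β ≠ minpoly F γ) : IsCoprime (minpoly F β) (minpoly F γ) := by
  rw [(minpoly.irreducible hβ).coprime_iff_not_dvd]
  exact fun hdvd => hne (eq_of_monic_of_associated (minpoly.monic hβ) (minpoly.monic hγ)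
    ((minpoly.irreducible hβ).associated_of_dvd (minpoly.irreducible hγ) hdvd))

lemma minpoly_ne_of_isSquare [Normal F K] (hβ : ¬IsSquare β) (hγ : IsSquare γ) :
    minpoly F β ≠ minpoly F γ := by
  rw [Ne, Normal.minpoly_eq_iff_mem_orbit]
  rintro ⟨τ, rfl⟩
  exact hβ (hγ.map τ)

lemma exists_aeval_eq_and_aeval_eq (hcop : IsCoprime (minpoly F β) (minpoly F γ))
    (hβ : Function.Surjective (aeval β : F[X] → K)) (hγ : Function.Surjective (aeval γ : F[X] → K))
    (a b : K) : ∃ p : F[X], aeval β p = a ∧ aeval γ p = b := by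
  obtain ⟨u, w, huw⟩ := hcop
  obtain ⟨p, rfl⟩ := hβ a
  obtain ⟨q, rfl⟩ := hγ b
  have hβw := congrArg (aeval β) huw
  have hγu := congrArg (aeval γ) huw
  simp only [map_add, map_mul, minpoly.aeval, mul_zero, zero_add, add_zero, map_one] at hβw hγu
  refine ⟨p * (w * minpoly F γ) + q * (u * minpoly F β), ?_, ?_⟩
  · simp only [map_add, map_mul, hβw, minpoly.aeval, mul_zero, mul_one, add_zero]
  · simp only [map_add, map_mul, hγu, minpoly.aeval, mul_zero, mul_one, zero_add]

lemma exists_sum_smul_pow_eq_aeval {R A : Type*} [CommRing R] [Nontrivial R] [CommRing A]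
    [Algebra R A] {n : ℕ} (hn : n ≠ 0) (p : R[X]) :
    ∃ c : Fin n → R, ∀ x : A, x ^ n = 1 → ∑ i, c i • x ^ (i : ℕ) = aeval x p := by
  have hnatDegree : (X ^ n - C (1 : R)).natDegree = n := natDegree_X_pow_sub_C
  have hdeg : (p %ₘ (X ^ n - C 1)).natDegree < n := by
    refine (natDegree_modByMonic_lt p (monic_X_pow_sub_C 1 hn) fun h => hn ?_).trans_eq hnatDegree
    rw [← hnatDegree, h, natDegree_one]
  refine ⟨fun i => (p %ₘ (X ^ n - C 1)).coeff i, fun x hx => ?_⟩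
  rw [Fin.sum_univ_eq_sum_range (fun i => (p %ₘ (X ^ n - C 1)).coeff i • x ^ i) n,
    ← aeval_eq_sum_range' hdeg]
  conv_rhs => rw [← modByMonic_add_div p (X ^ n - C 1)]
  simp [hx]

end PowerSums

section FiniteField

lemma pow_pow_eq_of_modEq {M : Type*} [Monoid M] {p m a b : ℕ} {x : M} (hx : x ^ p ^ m = x)
    (hab : a ≡ b [MOD m]) : x ^ p ^ a = x ^ p ^ b := by
  have hper : Function.Periodic (fun k => x ^ p ^ k) m := fun k => by
    simp only [add_comm k, pow_add, pow_mul, hx]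
  exact (hper.map_mod_nat a).symm.trans ((congrArg (fun k => x ^ p ^ k) hab).trans
    (hper.map_mod_nat b))

section AddNatCast

variable {R : Type*} [CommRing R] {p : ℕ} [Fact p.Prime] [CharP R p] {x : R}

lemma pow_char_pow_eq_add_natCast (hx : x ^ p - x = 1) (k : ℕ) : x ^ p ^ k = x + k := by
  induction k with
  | zero => simp
  | succ k ih =>
    have hk : (k : R) ^ p = k := map_natCast (frobenius R p) k
    rw [pow_succ, pow_mul, ih, add_pow_char, hk, Nat.cast_succ]
    linear_combination hx

lemma pow_char_sub_ne_one {k : ℕ} (hk : ¬p ∣ k) (hx : x ^ p ^ k = x) : x ^ p - x ≠ 1 := by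
  intro h
  rw [pow_char_pow_eq_add_natCast h, add_eq_left] at hx
  exact hk ((CharP.cast_eq_zero_iff R p k).1 hx)

end AddNatCast

lemma isFractionalFrobenius_iterateFrobenius {K : Type*} [Field K] [CharP K 3] {m h : ℕ}
    (hK : ∀ x : K, x ^ 3 ^ m = x) (hmod : 2 * h ≡ 3 [MOD m] ∨ 3 * h ≡ 1 [MOD m]) :
    IsFractionalFrobenius (iterateFrobenius K 3 h) := by
  have hiter (j k : ℕ) (hjk : j * h ≡ k [MOD m]) (x : K) :
      (iterateFrobenius K 3 h)^[j] x = x ^ 3 ^ k := by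
    rw [← coe_iterateFrobenius_mul, mul_comm]
    exact pow_pow_eq_of_modEq (hK x) hjk
  exact hmod.imp (hiter 2 3) (hiter 3 1)

section Generator

variable {K : Type*} [Field K] {α : Kˣ}

lemma pow_eq_one_iff_card_sub_one_dvd (hα : ∀ u : Kˣ, u ∈ Subgroup.zpowers α) (k : ℕ) :
    (α : K) ^ k = 1 ↔ Nat.card K - 1 ∣ k := by
  rw [← Nat.card_units, ← orderOf_eq_card_of_forall_mem_zpowers hα, orderOf_dvd_iff_pow_eq_one,
    ← Units.val_pow_eq_pow_val, Units.val_eq_one]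

lemma not_isSquare_of_forall_mem_zpowers (hα : ∀ u : Kˣ, u ∈ Subgroup.zpowers α)
    (hsq : ¬IsSquare (-1 : K)) : ¬IsSquare (α : K) := by
  intro h
  obtain ⟨k, hk⟩ := Subgroup.mem_zpowers_iff.1 (hα (-1))
  have hneg : (α : K) ^ k = -1 := by simpa using congrArg Units.val hk
  exact hsq (hneg ▸ h.zpow k)

lemma injective_pow_fin {M : Type*} [Monoid M] {a : Mˣ} {n : ℕ} (hn : n ≤ orderOf a) :
    Function.Injective fun i : Fin n => (a : M) ^ (i : ℕ) := by
  intro i j hij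
  refine Fin.ext (pow_injOn_Iio_orderOf (x := a) (i.2.trans_le hn) (j.2.trans_le hn) ?_)
  exact Units.ext (by simpa using hij)

lemma not_mem_bot_of_sq_ne_one [Algebra (ZMod 3) K] {β : K} (hβ₀ : β ≠ 0) (hβ : β ^ 2 ≠ 1) :
    β ∉ (⊥ : IntermediateField (ZMod 3) K) := by
  rw [IntermediateField.mem_bot]
  rintro ⟨a, rfl⟩
  have ha : a ≠ 0 := by
    rintro rfl
    exact hβ₀ (map_zero _)
  exact hβ (by rw [← map_pow, ZMod.pow_card_sub_one_eq_one ha, map_one])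

end Generator

lemma pow_card_galoisField {m : ℕ} (hm : m ≠ 0) (x : GaloisField 3 m) : x ^ 3 ^ m = x := by
  have := Fintype.ofFinite (GaloisField 3 m)
  rw [← GaloisField.card 3 m hm, Nat.card_eq_fintype_card, FiniteField.pow_card]

lemma not_isSquare_neg_one_galoisField {m : ℕ} (hodd : Odd m) :
    ¬IsSquare (-1 : GaloisField 3 m) := by
  have := Fintype.ofFinite (GaloisField 3 m)
  rw [FiniteField.isSquare_neg_one_iff, ← Nat.card_eq_fintype_card,
    GaloisField.card 3 m hodd.pos.ne', not_not]
  obtain ⟨k, rfl⟩ := hodd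
  rw [pow_succ, pow_mul, Nat.mul_mod, Nat.pow_mod]
  norm_num

end FiniteField

section TernaryCyclicCode

variable {m : ℕ} {α : (GaloisField 3 m)ˣ}

lemma parityMap_prod_surjective (hm : m.Prime) (hodd : Odd m) {e : ℕ} (he : Even e)
    (hne : ¬3 ^ m - 1 ∣ 2 * e) (hα : ∀ u, u ∈ Subgroup.zpowers α) :
    Function.Surjective ((parityMap m 1 (α : GaloisField 3 m)).prod (parityMap m e α)) := by
  have hcard := GaloisField.card 3 m hm.ne_zero
  have hone (k : ℕ) := pow_eq_one_iff_card_sub_one_dvd hα k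
  rw [hcard] at hone
  have hfinrank : (Module.finrank (ZMod 3) (GaloisField 3 m)).Prime := by
    rwa [GaloisField.finrank 3 hm.ne_zero]
  have hβ : (α : GaloisField 3 m) ^ 2 ≠ 1 := fun h =>
    hne (((hone 2).1 h).mul_right e)
  have hγ : ((α : GaloisField 3 m) ^ e) ^ 2 ≠ 1 := by
    rwa [← pow_mul, mul_comm, Ne, hone]
  have hcop : IsCoprime (minpoly (ZMod 3) (α : GaloisField 3 m)) (minpoly (ZMod 3) _) :=
    isCoprime_minpoly_of_ne (Algebra.IsIntegral.isIntegral _) (Algebra.IsIntegral.isIntegral _)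
      (minpoly_ne_of_isSquare (not_isSquare_of_forall_mem_zpowers hα
        (not_isSquare_neg_one_galoisField hodd)) (he.isSquare_pow (α : GaloisField 3 m)))
  have hn : 3 ^ m - 1 ≠ 0 := (Nat.sub_pos_of_lt (Nat.one_lt_pow hm.ne_zero (by norm_num))).ne'
  have hαn : (α : GaloisField 3 m) ^ (3 ^ m - 1) = 1 := (hone _).2 dvd_rfl
  rintro ⟨a, b⟩
  obtain ⟨p, rfl, rfl⟩ := exists_aeval_eq_and_aeval_eq hcop
    (aeval_surjective_of_finrank_prime hfinrank (not_mem_bot_of_sq_ne_one α.ne_zero hβ))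
    (aeval_surjective_of_finrank_prime hfinrank
      (not_mem_bot_of_sq_ne_one (pow_ne_zero e α.ne_zero) hγ)) a b
  obtain ⟨c, hc⟩ := exists_sum_smul_pow_eq_aeval (A := GaloisField 3 m) hn p
  refine ⟨c, Prod.ext ?_ ?_⟩
  · simpa [parityMap] using hc _ hαn
  · simpa [parityMap, pow_mul] using hc _ (by rw [← pow_mul, mul_comm, pow_mul, hαn, one_pow])

theorem finrank_ternaryCyclicCode (hm : m.Prime) (hodd : Odd m) {e : ℕ} (he : Even e)
    (hne : ¬3 ^ m - 1 ∣ 2 * e) (hα : ∀ u, u ∈ Subgroup.zpowers α) :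
    Module.finrank (ZMod 3) (ternaryCyclicCode m e (α : GaloisField 3 m)) = 3 ^ m - 1 - 2 * m := by
  have hrank := LinearMap.finrank_range_add_finrank_ker
    ((parityMap m 1 (α : GaloisField 3 m)).prod (parityMap m e α))
  rw [LinearMap.range_eq_top.2 (parityMap_prod_surjective hm hodd he hne hα), finrank_top,
    Module.finrank_prod, GaloisField.finrank 3 hm.ne_zero, LinearMap.ker_prod,
    Module.finrank_fin_fun] at hrank
  rw [ternaryCyclicCode]
  omega

theorem four_le_hammingNorm_of_mem_ternaryCyclicCode (hodd : Odd m) (hm3 : ¬3 ∣ m) {h : ℕ}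
    (hmod : 2 * h ≡ 3 [MOD m] ∨ 3 * h ≡ 1 [MOD m]) (hα : ∀ u, u ∈ Subgroup.zpowers α)
    {c : Fin (3 ^ m - 1) → ZMod 3}
    (hc : c ∈ ternaryCyclicCode m (3 ^ h + 13) (α : GaloisField 3 m)) (hc₀ : c ≠ 0) :
    4 ≤ hammingNorm c := by
  have hK := pow_card_galoisField hodd.pos.ne'
  have horder : orderOf α = 3 ^ m - 1 := by
    rw [orderOf_eq_card_of_forall_mem_zpowers hα, Nat.card_units,
      GaloisField.card 3 m hodd.pos.ne']
  refine four_le_hammingNorm_of_sum_smul_eq_zero (isFractionalFrobenius_iterateFrobenius hK hmod)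
    (fun x => pow_char_sub_ne_one hm3 (hK x)) (not_isSquare_neg_one_galoisField hodd)
    (injective_pow_fin horder.ge) (fun i => pow_ne_zero _ α.ne_zero) hc₀ ?_ ?_
  · simpa [parityMap] using hc.1
  · simpa [parityMap, powMap, iterateFrobenius_def, pow_add, pow_mul'] using hc.2

theorem exists_mem_ternaryCyclicCode_hammingNorm_le_four (hm : 2 ≤ m) (e : ℕ)
    (α : GaloisField 3 m) : ∃ c ∈ ternaryCyclicCode m e α, c ≠ 0 ∧ hammingNorm c ≤ 4 := by
  have := Fintype.ofFinite (GaloisField 3 m)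
  have h9 : 3 ^ 2 ≤ 3 ^ m := Nat.pow_le_pow_right (by norm_num) hm
  obtain ⟨c, hc, hc₀, hle⟩ := exists_ne_zero_map_eq_zero_hammingNorm_le_four
    ((parityMap m 1 α).prod (parityMap m e α)).toAddMonoidHom
    (by rw [Fintype.card_fin]; omega)
    (by rw [Fintype.card_prod, Fintype.card_fin, Nat.sub_add_cancel (by omega),
      ← Nat.card_eq_fintype_card, GaloisField.card 3 m (by omega), sq])
  exact ⟨c, by simpa [ternaryCyclicCode] using hc, hc₀, hle⟩

end TernaryCyclicCode

theorem stmt3 (m h : ℕ) (hm : Nat.Prime m) (hodd : Odd m)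
    (hh1 : 3 ≤ h) (hh2 : h ≤ m - 1)
    (hcond : (5 ≤ m ∧ 2 * h ≡ 3 [MOD m]) ∨ (m % 3 = 2 ∧ h = (m + 1) / 3))
    (α : (GaloisField 3 m)ˣ) (hα : ∀ u : (GaloisField 3 m)ˣ, u ∈ Subgroup.zpowers α) :
    Module.finrank (ZMod 3) (ternaryCyclicCode m (3 ^ h + 13) (α : GaloisField 3 m))
        = 3 ^ m - 1 - 2 * m ∧
      (∀ c ∈ ternaryCyclicCode m (3 ^ h + 13) (α : GaloisField 3 m),
        c ≠ 0 → 4 ≤ hammingNorm c) ∧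
      (∃ c ∈ ternaryCyclicCode m (3 ^ h + 13) (α : GaloisField 3 m),
        c ≠ 0 ∧ hammingNorm c = 4) := by
  have hm5 : 5 ≤ m := by grind
  have hm3 : ¬3 ∣ m := fun hdvd => by
    have := (Nat.prime_dvd_prime_iff_eq Nat.prime_three hm).1 hdvd
    omega
  have hmod : 2 * h ≡ 3 [MOD m] ∨ 3 * h ≡ 1 [MOD m] :=
    hcond.imp And.right fun hthird => by
      rw [show 3 * h = m + 1 by omega]
      exact Nat.add_mod_left m 1
  have heven : Even (3 ^ h + 13) := (Odd.pow (by decide)).add_odd (by decide)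
  have hndvd : ¬3 ^ m - 1 ∣ 2 * (3 ^ h + 13) := by
    have hpow : 3 ^ (h + 1) ≤ 3 ^ m := Nat.pow_le_pow_right (by norm_num) (by omega)
    have hpow5 : 3 ^ 5 ≤ 3 ^ m := Nat.pow_le_pow_right (by norm_num) hm5
    exact Nat.not_dvd_of_pos_of_lt (by positivity) (by omega)
  have hmin (c) := four_le_hammingNorm_of_mem_ternaryCyclicCode (c := c) hodd hm3 hmod hα
  obtain ⟨c, hc, hc₀, hle⟩ :=
    exists_mem_ternaryCyclicCode_hammingNorm_le_four (by omega) (3 ^ h + 13) (α : GaloisField 3 m)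
  exact ⟨finrank_ternaryCyclicCode hm hodd heven hndvd hα, hmin, c, hc, hc₀,
    hle.antisymm (hmin c hc hc₀)⟩
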